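/- If a Young diagram Y has an i-critical point with i ≥ 3, i.e. there exists 1 ≤ y ≤ n−1 with b(y+1) > b(y) and b(y) − y ≥ 3, then |S_Y(312)| > |S_Y(321)|. -/

import Mathlib

open Equiv

/-- `π` is a transversal of the Young diagram with row lengths `b` (zero-indexed:
the row at height `h` has `b h` cells, i.e. column `i` (1-indexed `i+1`) lies in that row
iff `(i:ℕ)+1 ≤ b h`). -/
def IsTransversal {n : ℕ} (b : Fin n → ℕ) (π : Equiv.Perm (Fin n)) : Prop :=
  ∀ i : Fin n, (i : ℕ) + 1 ≤ b (π i)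

/-- The transversal `π` contains the pattern `τ` inside the Young diagram `b`:
there are columns `f 0 < f 1 < …` whose dots are in the relative order prescribed by `τ`
and all rows and columns through these dots intersect inside the diagram. -/
def ContainsIn {n k : ℕ} (b : Fin n → ℕ) (π : Equiv.Perm (Fin n))
    (τ : Equiv.Perm (Fin k)) : Prop :=
  ∃ f : Fin k → Fin n, StrictMono f ∧
    (∀ s t : Fin k, τ s < τ t ↔ π (f s) < π (f t)) ∧
    (∀ s t : Fin k, (f s : ℕ) + 1 ≤ b (π (f t)))

/-- `|S_Y(τ)|`: the number of transversals of the Young diagram `b` avoiding `τ` in `Y`. -/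
noncomputable def SYcard {n k : ℕ} (b : Fin n → ℕ) (τ : Equiv.Perm (Fin k)) : ℕ :=
  Nat.card {π : Equiv.Perm (Fin n) // IsTransversal b π ∧ ¬ ContainsIn b π τ}

/-- Classical pattern containment for permutations. -/
def ContainsPat {n k : ℕ} (π : Equiv.Perm (Fin n)) (τ : Equiv.Perm (Fin k)) : Prop :=
  ∃ f : Fin k → Fin n, StrictMono f ∧ ∀ s t : Fin k, τ s < τ t ↔ π (f s) < π (f t)

/-- `|S_n(τ)|`: the number of permutations of length `n` avoiding `τ`. -/
noncomputable def SnCard (n : ℕ) {k : ℕ} (τ : Equiv.Perm (Fin k)) : ℕ :=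
  Nat.card {π : Equiv.Perm (Fin n) // ¬ ContainsPat π τ}

def p123 : Equiv.Perm (Fin 3) := Equiv.refl _
def p213 : Equiv.Perm (Fin 3) :=
  ⟨![1, 0, 2], ![1, 0, 2], by intro x; fin_cases x <;> rfl, by intro x; fin_cases x <;> rfl⟩
def p312 : Equiv.Perm (Fin 3) :=
  ⟨![2, 0, 1], ![1, 2, 0], by intro x; fin_cases x <;> rfl, by intro x; fin_cases x <;> rfl⟩
def p321 : Equiv.Perm (Fin 3) :=
  ⟨![2, 1, 0], ![2, 1, 0], by intro x; fin_cases x <;> rfl, by intro x; fin_cases x <;> rfl⟩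

/-- `(σ|τ)`: the block sum with the block of `σ` before and entirely above the block of `τ`. -/
def blockSum {m k : ℕ} (σ : Equiv.Perm (Fin m)) (τ : Equiv.Perm (Fin k)) :
    Equiv.Perm (Fin (m + k)) :=
  finSumFinEquiv.symm.trans ((((Equiv.sumCongr σ τ).trans
    (Equiv.sumComm (Fin m) (Fin k))).trans finSumFinEquiv).trans
    (finCongr (Nat.add_comm k m)))

/-- `|S_{↘Y}(τ)|`: avoiders whose two leftmost entries are decreasing. -/
noncomputable def SYcardLeftDesc {m k : ℕ} (b : Fin m → ℕ) (τ : Equiv.Perm (Fin k)) : ℕ :=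
  Nat.card {π : Equiv.Perm (Fin m) // IsTransversal b π ∧ ¬ ContainsIn b π τ ∧
    ∀ i j : Fin m, (i : ℕ) = 0 → (j : ℕ) = 1 → π j < π i}

/-- `|S_{↗Y}(τ)|`: avoiders whose two leftmost entries are increasing. -/
noncomputable def SYcardLeftAsc {m k : ℕ} (b : Fin m → ℕ) (τ : Equiv.Perm (Fin k)) : ℕ :=
  Nat.card {π : Equiv.Perm (Fin m) // IsTransversal b π ∧ ¬ ContainsIn b π τ ∧
    ∀ i j : Fin m, (i : ℕ) = 0 → (j : ℕ) = 1 → π i < π j}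

/-- `|S^{↘}_Y(τ)|`: avoiders in which the value `m` occurs to the left of the value `m-1`. -/
noncomputable def SYcardTopDesc {m k : ℕ} (b : Fin m → ℕ) (τ : Equiv.Perm (Fin k)) : ℕ :=
  Nat.card {π : Equiv.Perm (Fin m) // IsTransversal b π ∧ ¬ ContainsIn b π τ ∧
    ∀ u v : Fin m, (u : ℕ) + 1 = m → (v : ℕ) + 2 = m → π⁻¹ u < π⁻¹ v}

/-- `|S^{↗}_Y(τ)|`: avoiders in which the value `m-1` occurs to the left of the value `m`. -/
noncomputable def SYcardTopAsc {m k : ℕ} (b : Fin m → ℕ) (τ : Equiv.Perm (Fin k)) : ℕ :=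
  Nat.card {π : Equiv.Perm (Fin m) // IsTransversal b π ∧ ¬ ContainsIn b π τ ∧
    ∀ u v : Fin m, (u : ℕ) + 1 = m → (v : ℕ) + 2 = m → π⁻¹ v < π⁻¹ u}

/-!
Group the transversals by their left-to-right maxima (positions and values), or equivalently by the
running maximum `partialSups π`.

* A class contains at most one `321`-avoider: in a transversal every `321` pattern lies inside the
  diagram, and avoiding `321` forces the entries that are not left-to-right maxima to increase.
* A class contains at least one `312`-avoider, its lexicographically largest element: exchanging the
  `1` and the `2` of a `312` pattern inside the diagram does not leave the class.
* For a critical point of index at least `3`, some class contains two `312`-avoiders. On five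
  columns these are `32514` and `31542`, where the bottom row does not reach the last column, so
  that `514` and `312` (in columns `1`, `2` and `5`) are not inside the diagram.
-/

/-- The set `S_Y(τ)` of transversals of the Young diagram `b` that avoid `τ` in it. -/
def avoiders {n k : ℕ} (b : Fin n → ℕ) (τ : Perm (Fin k)) : Set (Perm (Fin n)) :=
  {π | IsTransversal b π ∧ ¬ ContainsIn b π τ}

lemma SYcard_eq_ncard_avoiders {n k : ℕ} (b : Fin n → ℕ) (τ : Perm (Fin k)) :
    SYcard b τ = (avoiders b τ).ncard :=
  rfl

lemma ncard_lt_ncard_of_image_subset_image {α β : Type*} {f : α → β} {s t : Set α}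
    (ht : t.Finite) (hs : s.InjOn f) (hst : f '' s ⊆ f '' t) (hnt : ¬ t.InjOn f) :
    s.ncard < t.ncard :=
  calc s.ncard = (f '' s).ncard := hs.ncard_image.symm
    _ ≤ (f '' t).ncard := Set.ncard_le_ncard hst (ht.image f)
    _ < t.ncard := (Set.ncard_image_le ht).lt_of_ne fun h => hnt (Set.injOn_of_ncard_image_eq h ht)

/-! ### Running maxima -/

section PartialSups

variable {α β : Type*}

lemma partialSups_eq_of_forall_exists_le [Preorder α] [LocallyFiniteOrderBot α]
    [SemilatticeSup β] {f g : α → β}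
    (h : ∀ i, ∃ k ≤ i, f k = g k ∧ f i ≤ f k ∧ g i ≤ g k) : partialSups f = partialSups g := by
  refine le_antisymm (fun i => partialSups_le _ _ _ fun l hl => ?_)
    (fun i => partialSups_le _ _ _ fun l hl => ?_) <;> obtain ⟨k, hkl, hk, hf, hg⟩ := h l
  · exact (hf.trans_eq hk).trans (le_partialSups_of_le g (hkl.trans hl))
  · exact (hg.trans_eq hk.symm).trans (le_partialSups_of_le f (hkl.trans hl))

lemma partialSups_comp_swap [PartialOrder α] [DecidableEq α] [LocallyFiniteOrderBot α]
    [SemilatticeSup β] (f : α → β) {a p q : α} (hap : a < p) (haq : a < q)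
    (hp : f p ≤ f a) (hq : f q ≤ f a) : partialSups (f ∘ swap p q) = partialSups f := by
  have ha : swap p q a = a := swap_apply_of_ne_of_ne hap.ne haq.ne
  refine partialSups_eq_of_forall_exists_le fun i => ?_
  rcases eq_or_ne i p with rfl | hip
  · exact ⟨a, hap.le, by simpa [ha] using ⟨hq, hp⟩⟩
  rcases eq_or_ne i q with rfl | hiq
  · exact ⟨a, haq.le, by simpa [ha] using ⟨hp, hq⟩⟩
  · exact ⟨i, le_rfl, by simp [swap_apply_of_ne_of_ne hip hiq]⟩

lemma exists_lt_of_partialSups_eq [LinearOrder α] [LocallyFiniteOrderBot α] [LinearOrder β]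
    {σ τ : α ≃ β} (h : partialSups σ = partialSups τ) {i : α} (heq : ∀ k < i, σ k = τ k)
    (hlt : σ i < τ i) : ∃ k l, k < i ∧ i < l ∧ τ i < τ k ∧ τ l < τ i := by
  obtain ⟨k, hki, hk⟩ := exists_partialSups_eq σ i
  have hle : τ i ≤ σ k := by
    rw [← hk, h]
    exact le_partialSups τ i
  have hki : k < i := hki.lt_of_ne <| by
    rintro rfl
    exact hle.not_gt hlt
  have hl : τ (τ.symm (σ i)) = σ i := τ.apply_symm_apply _
  refine ⟨k, τ.symm (σ i), hki, ?_, ?_, hl.trans_lt hlt⟩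
  · by_contra! hli
    rcases hli.lt_or_eq with hli | hli
    · exact hli.ne (σ.injective ((heq _ hli).trans hl))
    · exact hlt.ne (by rw [← hl, hli])
  · rw [heq k hki] at hle
    exact hle.lt_of_ne (τ.injective.ne hki.ne')

end PartialSups

/-! ### Avoiders of `321` -/

variable {n : ℕ} {b : Fin n → ℕ} {π ρ : Perm (Fin n)}

lemma containsPat_p321 {i j k : Fin n} (hij : i < j) (hjk : j < k) (hπij : π j < π i)
    (hπjk : π k < π j) : ContainsPat π p321 := by
  have hπik := hπjk.trans hπij
  refine ⟨![i, j, k], by simp [hij, hjk], fun s t => ?_⟩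
  fin_cases s <;> fin_cases t <;> simp [p321, hπij, hπjk, hπik, hπij.le, hπjk.le, hπik.le]

lemma ContainsPat.containsIn_of_last_eq_zero {k : ℕ} {τ : Perm (Fin (k + 1))}
    (h : ContainsPat π τ) (hτ : τ (Fin.last k) = 0) (hmono : Monotone b)
    (hπ : IsTransversal b π) : ContainsIn b π τ := by
  obtain ⟨f, hf, hord⟩ := h
  refine ⟨f, hf, hord, fun s t => ?_⟩
  have hcol : f s ≤ f (Fin.last k) := hf.monotone (Fin.le_last s)
  have hrow : π (f (Fin.last k)) ≤ π (f t) :=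
    not_lt.1 fun hlt => Fin.not_lt_zero _ (hτ ▸ (hord t (Fin.last k)).2 hlt)
  calc (f s : ℕ) + 1 ≤ f (Fin.last k) + 1 := Nat.succ_le_succ hcol
    _ ≤ b (π (f (Fin.last k))) := hπ _
    _ ≤ b (π (f t)) := hmono hrow

lemma eq_of_partialSups_eq_of_not_containsPat_p321 (hπ : ¬ ContainsPat π p321)
    (hρ : ¬ ContainsPat ρ p321) (h : partialSups π = partialSups ρ) : π = ρ := by
  have not_lt_of_eq_below : ∀ {σ τ : Perm (Fin n)}, ¬ ContainsPat τ p321 →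
      partialSups σ = partialSups τ → ∀ i, (∀ k < i, σ k = τ k) → ¬ σ i < τ i := by
    intro σ τ hτ hστ i heq hlt
    obtain ⟨k, l, hki, hil, hk, hl⟩ := exists_lt_of_partialSups_eq hστ heq hlt
    exact hτ (containsPat_p321 hki hil hk hl)
  ext1 i
  induction i using WellFoundedLT.induction with
  | ind i ih =>
    exact le_antisymm (not_lt.1 (not_lt_of_eq_below hπ h.symm i fun k hk => (ih k hk).symm))
      (not_lt.1 (not_lt_of_eq_below hρ h i ih))

lemma injOn_partialSups_avoiders_p321 (hmono : Monotone b) :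
    (avoiders b p321).InjOn fun π : Perm (Fin n) => partialSups π := by
  have not_containsPat : ∀ σ ∈ avoiders b p321, ¬ ContainsPat σ p321 :=
    fun σ hσ hc => hσ.2 (hc.containsIn_of_last_eq_zero rfl hmono hσ.1)
  exact fun π hπ ρ hρ => eq_of_partialSups_eq_of_not_containsPat_p321 (not_containsPat π hπ)
    (not_containsPat ρ hρ)

/-! ### Avoiders of `312` -/

lemma ContainsIn.exists_p312 (h : ContainsIn b π p312) :
    ∃ x y z, x < y ∧ y < z ∧ π y < π z ∧ π z < π x ∧ (z : ℕ) + 1 ≤ b (π y) := by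
  obtain ⟨f, hf, hord, hin⟩ := h
  exact ⟨f 0, f 1, f 2, hf (by decide), hf (by decide), (hord 1 2).1 (by decide),
    (hord 2 0).1 (by decide), hin 2 1⟩

lemma IsTransversal.mul_swap (hπ : IsTransversal b π) {p q : Fin n}
    (hp : (p : ℕ) + 1 ≤ b (π q)) (hq : (q : ℕ) + 1 ≤ b (π p)) :
    IsTransversal b (π * swap p q) := by
  intro i
  rw [Perm.mul_apply]
  rcases eq_or_ne i p with rfl | hip
  · rwa [swap_apply_left]
  rcases eq_or_ne i q with rfl | hiq
  · rwa [swap_apply_right]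
  · rw [swap_apply_of_ne_of_ne hip hiq]
    exact hπ i

lemma exists_mem_avoiders_p312_partialSups_eq (hmono : Monotone b) (hπ : IsTransversal b π) :
    ∃ ρ ∈ avoiders b p312, partialSups ρ = partialSups π := by
  obtain ⟨ρ, ⟨hρ, hρπ⟩, hmax⟩ := Set.exists_max_image
    {ρ : Perm (Fin n) | IsTransversal b ρ ∧ partialSups ρ = partialSups π}
    (fun ρ => toLex (ρ : Fin n → Fin n)) (Set.toFinite _) ⟨π, hπ, rfl⟩
  refine ⟨ρ, ⟨hρ, fun hc => ?_⟩, hρπ⟩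
  obtain ⟨x, y, z, hxy, hyz, hρyz, hρzx, hin⟩ := hc.exists_p312
  have htrans : IsTransversal b (ρ * swap y z) :=
    hρ.mul_swap ((hρ y).trans (hmono hρyz.le)) hin
  have hclass : partialSups (ρ * swap y z) = partialSups π :=
    (partialSups_comp_swap ρ hxy (hxy.trans hyz) (hρyz.trans hρzx).le hρzx.le).trans hρπ
  have hlex : toLex (ρ : Fin n → Fin n) < toLex (⇑(ρ * swap y z)) := by
    have h := Pi.lex_desc (f := ⇑(ρ * swap y z)) hyz.le (by simpa using hρyz)
    rwa [Perm.coe_mul, Function.comp_assoc, ← Perm.coe_mul (swap y z), swap_mul_self,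
      Perm.coe_one, Function.comp_id] at h
  exact (hmax _ ⟨htrans, hclass⟩).not_gt hlex

/-! ### Two avoiders of `312` with the same running maximum -/

section CritWord

variable {j m u v w : ℕ}

/-- The one-line notation that on the columns `j, …, m + 4` reads
`j + 1, …, m, m + 2, u, m + 4, v, w` and is the identity elsewhere. The two `312`-avoiders
attached to a critical point at the (zero-indexed) row `j` of length `m + 4` have this form. -/
def critWord (j m u v w x : ℕ) : ℕ :=
  if x < j then x
  else if x < m then x + 1
  else if x = m then m + 2
  else if x = m + 1 then u
  else if x = m + 2 then m + 4
  else if x = m + 3 then v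
  else if x = m + 4 then w
  else x

/-- The two arrangements `u, v, w` of `j, m + 1, m + 3` for which `critWord j m u v w` is the
one-line notation of a `312`-avoiding transversal; they generalize `32514` and `31542`, the case
`j = m`. -/
def IsCritTriple (j m u v w : ℕ) : Prop :=
  (u = m + 1 ∧ v = j ∧ w = m + 3) ∨ (u = j ∧ v = m + 3 ∧ w = m + 1)

lemma critWord_self (hjm : j ≤ m) : critWord j m u v w m = m + 2 := by
  unfold critWord
  split_ifs <;> omega

lemma critWord_add_one (hjm : j ≤ m) : critWord j m u v w (m + 1) = u := by
  unfold critWord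
  split_ifs <;> omega

lemma critWord_add_two (hjm : j ≤ m) : critWord j m u v w (m + 2) = m + 4 := by
  unfold critWord
  split_ifs <;> omega

lemma critWord_add_three (hjm : j ≤ m) : critWord j m u v w (m + 3) = v := by
  unfold critWord
  split_ifs <;> omega

lemma critWord_add_four (hjm : j ≤ m) : critWord j m u v w (m + 4) = w := by
  unfold critWord
  split_ifs <;> omega

lemma critWord_lt_critWord (hjm : j ≤ m) (h : IsCritTriple j m u v w) {x y : ℕ} (hxy : x < y)
    (hy₁ : y ≠ m + 1) (hy₃ : y ≠ m + 3) (hy₄ : y ≠ m + 4) :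
    critWord j m u v w x < critWord j m u v w y := by
  obtain ⟨hu, hv, hw⟩ : u ≤ m + 1 ∧ v ≤ m + 3 ∧ w ≤ m + 3 := by
    unfold IsCritTriple at h
    omega
  clear h
  unfold critWord
  split_ifs <;> omega

lemma critWord_injective (hjm : j ≤ m) (h : IsCritTriple j m u v w) :
    Function.Injective (critWord j m u v w) := by
  refine .of_lt_imp_ne fun x y hxy heq => ?_
  have hy : y = m + 1 ∨ y = m + 3 ∨ y = m + 4 := by
    by_contra! hy
    exact (critWord_lt_critWord hjm h hxy hy.1 hy.2.1 hy.2.2).ne heq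
  unfold IsCritTriple at h
  rcases hy with rfl | rfl | rfl <;>
    simp only [critWord_add_one hjm, critWord_add_three hjm, critWord_add_four hjm] at heq <;>
    unfold critWord at heq <;> split_ifs at heq <;> omega

lemma critWord_lt (hjm : j ≤ m) (h : IsCritTriple j m u v w) (hmn : m + 4 < n) {x : ℕ}
    (hx : x < n) : critWord j m u v w x < n := by
  unfold IsCritTriple at h
  unfold critWord
  split_ifs <;> omega

lemma le_critWord_or (hjm : j ≤ m) (h : IsCritTriple j m u v w) (x : ℕ) :
    x ≤ critWord j m u v w x ∨ j ≤ critWord j m u v w x ∧ x < m + 4 ∨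
      j + 1 ≤ critWord j m u v w x ∧ x = m + 4 := by
  unfold IsCritTriple at h
  unfold critWord
  split_ifs <;> omega

lemma critWord_eq_of_p312 (hjm : j ≤ m) (h : IsCritTriple j m u v w) {x y z : ℕ} (hxy : x < y)
    (hyz : y < z) (hlt₁ : critWord j m u v w y < critWord j m u v w z)
    (hlt₂ : critWord j m u v w z < critWord j m u v w x) :
    critWord j m u v w y = j ∧ z = m + 4 := by
  have not_max : ∀ {t}, x < t → critWord j m u v w t < critWord j m u v w x →
      t = m + 1 ∨ t = m + 3 ∨ t = m + 4 := by
    intro t hxt hlt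
    by_contra! ht
    exact (critWord_lt_critWord hjm h hxt ht.1 ht.2.1 ht.2.2).not_gt hlt
  have hx : x < m + 1 → critWord j m u v w x ≤ m + 2 := by
    intro hx
    unfold critWord
    split_ifs <;> omega
  have hu := critWord_add_one (u := u) (v := v) (w := w) hjm
  have hv := critWord_add_three (u := u) (v := v) (w := w) hjm
  have hw := critWord_add_four (u := u) (v := v) (w := w) hjm
  unfold IsCritTriple at h
  rcases not_max hxy (hlt₁.trans hlt₂) with rfl | rfl | rfl <;>
    rcases not_max (hxy.trans hyz) hlt₂ with rfl | rfl | rfl <;> omega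

lemma exists_perm_val_eq {g : ℕ → ℕ} (hg : g.Injective) (hlt : ∀ x < n, g x < n) :
    ∃ π : Perm (Fin n), ∀ x, (π x : ℕ) = g x := by
  let f : Fin n → Fin n := fun x => ⟨g x, hlt x x.2⟩
  have hf : f.Injective := fun x y hxy => Fin.ext (hg (congrArg Fin.val hxy))
  exact ⟨Equiv.ofBijective f (Finite.injective_iff_bijective.1 hf), fun _ => rfl⟩

lemma mem_avoiders_p312_of_critWord (hmono : Monotone b) (hb : ∀ y : Fin n, (y : ℕ) + 1 ≤ b y)
    (hj : j + 1 < n) (hrow : b ⟨j, Nat.lt_of_succ_lt hj⟩ = m + 4) (hnext : m + 4 < b ⟨j + 1, hj⟩)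
    (hjm : j ≤ m) (h : IsCritTriple j m u v w) (hπ : ∀ x, (π x : ℕ) = critWord j m u v w x) :
    π ∈ avoiders b p312 := by
  refine ⟨fun x => ?_, fun hc => ?_⟩
  · have hx := le_critWord_or hjm h x
    rw [← hπ] at hx
    rcases hx with hx | ⟨hx, hxm⟩ | ⟨hx, hxm⟩
    · exact (Nat.succ_le_succ hx).trans (hb _)
    · have : b ⟨j, _⟩ ≤ b (π x) := hmono (Fin.mk_le_of_le_val hx)
      omega
    · have : b ⟨j + 1, _⟩ ≤ b (π x) := hmono (Fin.mk_le_of_le_val hx)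
      omega
  · obtain ⟨x, y, z, hxy, hyz, hlt₁, hlt₂, hin⟩ := hc.exists_p312
    rw [Fin.lt_def, hπ, hπ] at hlt₁ hlt₂
    obtain ⟨hy, hz⟩ := critWord_eq_of_p312 hjm h hxy hyz hlt₁ hlt₂
    have hπy : π y = ⟨j, Nat.lt_of_succ_lt hj⟩ := Fin.ext ((hπ y).trans hy)
    rw [hπy, hrow] at hin
    omega

lemma exists_mem_avoiders_p312_critWord (hmono : Monotone b)
    (hb : ∀ y : Fin n, (y : ℕ) + 1 ≤ b y) (hj : j + 1 < n)
    (hrow : b ⟨j, Nat.lt_of_succ_lt hj⟩ = m + 4) (hnext : m + 4 < b ⟨j + 1, hj⟩)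
    (hmn : m + 4 < n) (hjm : j ≤ m) (h : IsCritTriple j m u v w) :
    ∃ π ∈ avoiders b p312, ∀ x, (π x : ℕ) = critWord j m u v w x := by
  obtain ⟨π, hπ⟩ := exists_perm_val_eq (critWord_injective hjm h) fun _ => critWord_lt hjm h hmn
  exact ⟨π, mem_avoiders_p312_of_critWord hmono hb hj hrow hnext hjm h hπ, hπ⟩

lemma critWord_eq_of_ne {u' v' w' x : ℕ} (h₁ : x ≠ m + 1) (h₃ : x ≠ m + 3) (h₄ : x ≠ m + 4) :
    critWord j m u v w x = critWord j m u' v' w' x := by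
  simp only [critWord, if_neg h₁, if_neg h₃, if_neg h₄]

lemma exists_critWord_le (hjm : j ≤ m) (x : ℕ) :
    ∃ y ≤ x, (y ≠ m + 1 ∧ y ≠ m + 3 ∧ y ≠ m + 4) ∧ ∀ {u v w}, IsCritTriple j m u v w →
      critWord j m u v w x ≤ critWord j m u v w y := by
  by_cases h₁ : x = m + 1
  · refine ⟨m, by omega, by omega, fun h => ?_⟩
    rw [h₁, critWord_add_one hjm, critWord_self hjm]
    unfold IsCritTriple at h
    omega
  by_cases h₃ : x = m + 3
  · refine ⟨m + 2, by omega, by omega, fun h => ?_⟩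
    rw [h₃, critWord_add_three hjm, critWord_add_two hjm]
    unfold IsCritTriple at h
    omega
  by_cases h₄ : x = m + 4
  · refine ⟨m + 2, by omega, by omega, fun h => ?_⟩
    rw [h₄, critWord_add_four hjm, critWord_add_two hjm]
    unfold IsCritTriple at h
    omega
  · exact ⟨x, le_rfl, ⟨h₁, h₃, h₄⟩, fun _ => le_rfl⟩

lemma partialSups_eq_of_critWord {u' v' w' : ℕ} (hjm : j ≤ m) (h : IsCritTriple j m u v w)
    (h' : IsCritTriple j m u' v' w') (hπ : ∀ x, (π x : ℕ) = critWord j m u v w x)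
    (hρ : ∀ x, (ρ x : ℕ) = critWord j m u' v' w' x) : partialSups π = partialSups ρ := by
  refine partialSups_eq_of_forall_exists_le fun i => ?_
  obtain ⟨y, hyi, ⟨h₁, h₃, h₄⟩, hle⟩ := exists_critWord_le hjm i
  refine ⟨⟨y, hyi.trans_lt i.2⟩, hyi, Fin.ext ?_, Fin.le_def.2 ?_, Fin.le_def.2 ?_⟩
  · rw [hπ, hρ]
    exact critWord_eq_of_ne h₁ h₃ h₄
  · rw [hπ, hπ]
    exact hle h
  · rw [hρ, hρ]
    exact hle h'

end CritWord

lemma not_injOn_partialSups_avoiders_p312 (hmono : Monotone b)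
    (hb : ∀ y : Fin n, (y : ℕ) + 1 ≤ b y ∧ b y ≤ n) {j : ℕ} (hj : j + 1 < n)
    (hlt : b ⟨j, Nat.lt_of_succ_lt hj⟩ < b ⟨j + 1, hj⟩)
    (h4 : j + 4 ≤ b ⟨j, Nat.lt_of_succ_lt hj⟩) :
    ¬ (avoiders b p312).InjOn fun π : Perm (Fin n) => partialSups π := by
  intro hinj
  obtain ⟨m, hrow⟩ := Nat.exists_eq_add_of_le' (le_of_add_le_right h4)
  have hjm : j ≤ m := by omega
  have hmn : m + 4 < n := hrow ▸ hlt.trans_le (hb _).2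
  have exists_avoider : ∀ {u v w}, IsCritTriple j m u v w →
      ∃ π ∈ avoiders b p312, ∀ x, (π x : ℕ) = critWord j m u v w x :=
    exists_mem_avoiders_p312_critWord hmono (fun y => (hb y).1) hj hrow (hrow ▸ hlt) hmn hjm
  have h : IsCritTriple j m (m + 1) j (m + 3) := Or.inl ⟨rfl, rfl, rfl⟩
  have h' : IsCritTriple j m j (m + 3) (m + 1) := Or.inr ⟨rfl, rfl, rfl⟩
  obtain ⟨π, hπ, hπw⟩ := exists_avoider h
  obtain ⟨ρ, hρ, hρw⟩ := exists_avoider h'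
  have hπρ : π = ρ := hinj hπ hρ (partialSups_eq_of_critWord hjm h h' hπw hρw)
  have hcol : m + 1 = j :=
    calc m + 1 = π ⟨m + 1, by omega⟩ := ((hπw _).trans (critWord_add_one hjm)).symm
      _ = ρ ⟨m + 1, by omega⟩ := by rw [hπρ]
      _ = j := (hρw _).trans (critWord_add_one hjm)
  omega

theorem stmt12 (n : ℕ) (b : Fin n → ℕ) (hmono : Monotone b)
    (hb : ∀ y : Fin n, (y : ℕ) + 1 ≤ b y ∧ b y ≤ n)
    (hcrit : ∃ (j : ℕ) (h : j + 1 < n),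
      b ⟨j, Nat.lt_of_succ_lt h⟩ < b ⟨j + 1, h⟩ ∧ j + 4 ≤ b ⟨j, Nat.lt_of_succ_lt h⟩) :
    SYcard b p321 < SYcard b p312 := by
  obtain ⟨j, hj, hlt, h4⟩ := hcrit
  rw [SYcard_eq_ncard_avoiders, SYcard_eq_ncard_avoiders]
  refine ncard_lt_ncard_of_image_subset_image (f := fun π : Perm (Fin n) => partialSups π)
    (Set.toFinite _) (injOn_partialSups_avoiders_p321 hmono) ?_
    (not_injOn_partialSups_avoiders_p312 hmono hb hj hlt h4)
  rintro _ ⟨π, hπ, rfl⟩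
  exact exists_mem_avoiders_p312_partialSups_eq hmono hπ.1
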